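/- Let A = ℚ[t₁, t₂] ⊗ Λ(v₁,…,v₅) with deg v₁ = deg v₂ = deg v₃ = 3 and deg v₄ = deg v₅ = 7, and let D be the unique derivation of degree +1 on A with D t₁ = D t₂ = 0, D v₁ = D v₂ = D v₃ = 0, D v₄ = v₁v₂t₁ + t₁⁴ and D v₅ = v₁v₃t₁ + t₂⁴. Then D ∘ D = 0 and dim_ℚ H(A, D) < ∞. -/

import Mathlib

/-!
Multiplication by a generator `tᵢ` commutes with `D`, and `D ∘ D` commutes with multiplication by
every generator (up to signs this is the Leibniz rule applied twice), so `D ∘ D` vanishes as soon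
as it vanishes on the generators.

For the cohomology, regard `A` as a module over `P = ℚ[t₁, t₂]`; it is finitely generated and `D`
is `P`-linear, so `ker D` is a finitely generated `P`-module because `P` is Noetherian.
Since `D v₄ = t₁⁴ + v₁v₂t₁` with `(v₁v₂)² = 0`, one has
`D (v₄ (t₁⁴ - v₁v₂t₁)) = (t₁⁴ + v₁v₂t₁) (t₁⁴ - v₁v₂t₁) = t₁⁸`, and similarly for `t₂` with `v₅`.
Thus `t₁⁸` and `t₂⁸` are exact and act as zero on cohomology, which is then a finitely generated
module over the finite-dimensional algebra `P / (t₁⁸, t₂⁸)`.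
-/

/- D v₄ = v₁v₂t₁ + t₁⁴, D v₅ = v₁v₃t₁ + t₂⁴ on ℚ[t₁,t₂] ⊗ Λ(v₁,…,v₅), deg v = (3,3,3,7,7). -/

open scoped TensorProduct

set_option synthInstance.maxHeartbeats 1000000
set_option maxHeartbeats 1000000

noncomputable section

/-- The free graded-commutative ℚ-algebra `ℚ[t₁,…,t_r] ⊗ Λ(v₁,…,v_n)`:
the tensor product of a polynomial algebra on `r` generators of degree 2 with
an exterior algebra on `n` generators of odd degrees. -/
abbrev FGCA (r n : ℕ) : Type :=
  MvPolynomial (Fin r) ℚ ⊗[ℚ] ExteriorAlgebra ℚ (Fin n → ℚ)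

/-- The degree-2 polynomial generators `tᵢ`. -/
def tg (r n : ℕ) (i : Fin r) : FGCA r n := (MvPolynomial.X i) ⊗ₜ 1

/-- The odd-degree exterior generators `vⱼ`. -/
def vg (r n : ℕ) (j : Fin n) : FGCA r n :=
  1 ⊗ₜ (ExteriorAlgebra.ι ℚ (Pi.single j (1 : ℚ)))

/-- The monomial `t^α · v_S` (with the exterior factors multiplied in increasing
order of index).  These monomials form a ℚ-basis of `FGCA r n`. -/
def gmon (r n : ℕ) (α : Fin r →₀ ℕ) (S : Finset (Fin n)) : FGCA r n :=
  (MvPolynomial.monomial α (1 : ℚ)) ⊗ₜ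
    ((S.sort (· ≤ ·)).map fun j => ExteriorAlgebra.ι ℚ (Pi.single j (1 : ℚ))).prod

/-- The (cohomological) degree of the monomial `t^α · v_S`, where each `tᵢ` has
degree `2` and each `vⱼ` has degree `dv j`. -/
def gdeg (r n : ℕ) (dv : Fin n → ℕ) (α : Fin r →₀ ℕ) (S : Finset (Fin n)) : ℕ :=
  (α.sum fun _ k => 2 * k) + S.sum dv

/-- The homogeneous part of degree `k` of `FGCA r n`: the span of the monomials
of degree `k`. -/
def homog (r n : ℕ) (dv : Fin n → ℕ) (k : ℕ) : Submodule ℚ (FGCA r n) :=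
  Submodule.span ℚ { a | ∃ α S, gdeg r n dv α S = k ∧ a = gmon r n α S }

/-- The graded Leibniz rule for a degree `+1` derivation `D`:
`D(ab) = D(a)·b + (−1)^(deg a) a·D(b)` for homogeneous `a`. -/
def IsLeibniz (r n : ℕ) (dv : Fin n → ℕ) (D : FGCA r n →ₗ[ℚ] FGCA r n) : Prop :=
  ∀ (p : ℕ) (a b : FGCA r n), a ∈ homog r n dv p →
    D (a * b) = D a * b + ((-1 : ℚ) ^ p) • (a * D b)

/-- `D` raises (cohomological) degree by `1`. -/
def RaisesDegByOne (r n : ℕ) (dv : Fin n → ℕ) (D : FGCA r n →ₗ[ℚ] FGCA r n) : Prop :=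
  ∀ (k : ℕ), ∀ a ∈ homog r n dv k, D a ∈ homog r n dv (k + 1)

/-- The cohomology `H(A, D) = ker D / im D` as a ℚ-vector space, realized as the
image of `ker D` in `A ⧸ im D`. -/
abbrev Cohomology (r n : ℕ) (D : FGCA r n →ₗ[ℚ] FGCA r n) : Type :=
  (LinearMap.ker D).map (LinearMap.range D).mkQ

end

noncomputable section

section Helpers

open MvPolynomial

/-! ### Relations and degrees of the generators -/

lemma gmon_single_empty (r n : ℕ) (i : Fin r) :
    gmon r n (Finsupp.single i 1) ∅ = tg r n i := by
  simp [gmon, tg, X]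

lemma gmon_zero_singleton (r n : ℕ) (j : Fin n) : gmon r n 0 {j} = vg r n j := by
  simp [gmon, vg]

lemma tg_mem_homog (r n : ℕ) (d : Fin n → ℕ) (i : Fin r) : tg r n i ∈ homog r n d 2 :=
  Submodule.subset_span ⟨Finsupp.single i 1, ∅, by simp [gdeg], (gmon_single_empty r n i).symm⟩

lemma vg_mem_homog (r n : ℕ) (d : Fin n → ℕ) (j : Fin n) : vg r n j ∈ homog r n d (d j) :=
  Submodule.subset_span ⟨0, {j}, by simp [gdeg], (gmon_zero_singleton r n j).symm⟩

lemma one_mem_homog (r n : ℕ) (d : Fin n → ℕ) : (1 : FGCA r n) ∈ homog r n d 0 :=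
  Submodule.subset_span ⟨0, ∅, by simp [gdeg],
    by simp [gmon, Algebra.TensorProduct.one_def]⟩

lemma tg_mul (r n : ℕ) (i : Fin r) (x : FGCA r n) :
    tg r n i * x = (X i : MvPolynomial (Fin r) ℚ) • x := by
  exact (Algebra.smul_def (A := FGCA r n) (X i : MvPolynomial (Fin r) ℚ) x).symm

lemma tg_comm (r n : ℕ) (i : Fin r) (x : FGCA r n) : x * tg r n i = tg r n i * x := by
  have : tg r n i = algebraMap (MvPolynomial (Fin r) ℚ) (FGCA r n) (X i) := rfl
  rw [this]
  exact (Algebra.commutes _ _).symm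

lemma vg_sq (r n : ℕ) (j : Fin n) : vg r n j * vg r n j = 0 := by
  simp [vg]

lemma vg_anticomm (r n : ℕ) (i j : Fin n) :
    vg r n i * vg r n j = -(vg r n j * vg r n i) := by
  have h := ExteriorAlgebra.ι_add_mul_swap (R := ℚ)
    (Pi.single i (1 : ℚ) : Fin n → ℚ) (Pi.single j 1)
  rw [eq_neg_iff_add_eq_zero]
  simp only [vg, Algebra.TensorProduct.tmul_mul_tmul, ← TensorProduct.tmul_add, h,
    TensorProduct.tmul_zero]

/-- A subspace containing `1` and stable under left multiplication by the generators is
everything. -/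
lemma eq_top_of_generators (r n : ℕ) (K : Submodule ℚ (FGCA r n)) (h1 : (1 : FGCA r n) ∈ K)
    (ht : ∀ i, ∀ x ∈ K, tg r n i * x ∈ K) (hv : ∀ j, ∀ x ∈ K, vg r n j * x ∈ K) : K = ⊤ := by
  have hP : ∀ p : MvPolynomial (Fin r) ℚ, ∀ x ∈ K, p • x ∈ K := by
    intro p
    induction p using MvPolynomial.induction_on with
    | C a =>
      intro x hx
      have : (C a : MvPolynomial (Fin r) ℚ) • x = a • x := algebraMap_smul _ a x
      rw [this]
      exact K.smul_mem a hx
    | add p q hp hq =>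
      intro x hx
      rw [add_smul]
      exact K.add_mem (hp x hx) (hq x hx)
    | mul_X p i hp =>
      intro x hx
      rw [mul_smul, ← tg_mul]
      exact hp _ (ht i x hx)
  have hE : ∀ e : ExteriorAlgebra ℚ (Fin n → ℚ), ∀ x ∈ K, ((1 ⊗ₜ e : FGCA r n)) * x ∈ K := by
    intro e
    induction e using ExteriorAlgebra.induction with
    | algebraMap a =>
      intro x hx
      have : (1 ⊗ₜ algebraMap ℚ _ a : FGCA r n) = a • 1 := by
        rw [Algebra.algebraMap_eq_smul_one, TensorProduct.tmul_smul,
          Algebra.TensorProduct.one_def]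
      rw [this, smul_mul_assoc, one_mul]
      exact K.smul_mem a hx
    | ι m =>
      intro x hx
      have hm : (1 ⊗ₜ ExteriorAlgebra.ι ℚ m : FGCA r n) = ∑ j, m j • vg r n j := by
        conv_lhs => rw [pi_eq_sum_univ' m]
        simp only [map_sum, map_smul, TensorProduct.tmul_sum, TensorProduct.tmul_smul, vg]
      rw [hm, Finset.sum_mul]
      refine K.sum_mem fun j _ => ?_
      rw [smul_mul_assoc]
      exact K.smul_mem _ (hv j x hx)
    | mul a b ha hb =>
      intro x hx
      have : (1 ⊗ₜ (a * b) : FGCA r n) = (1 ⊗ₜ a) * (1 ⊗ₜ b) := by simp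
      rw [this, mul_assoc]
      exact ha _ (hb x hx)
    | add a b ha hb =>
      intro x hx
      rw [TensorProduct.tmul_add, add_mul]
      exact K.add_mem (ha x hx) (hb x hx)
  rw [Submodule.eq_top_iff']
  intro x
  induction x using TensorProduct.induction_on with
  | zero => exact K.zero_mem
  | add x y hx hy => exact K.add_mem hx hy
  | tmul p e =>
    have : (p ⊗ₜ e : FGCA r n) = p • ((1 ⊗ₜ e : FGCA r n) * 1) := by
      rw [mul_one, TensorProduct.smul_tmul', smul_eq_mul, mul_one]
    rw [this]
    exact hP p _ (hE e _ h1)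

/-! ### Consequences of the Leibniz rule -/

lemma leibniz_one {r n : ℕ} {d : Fin n → ℕ} {D : FGCA r n →ₗ[ℚ] FGCA r n}
    (hL : IsLeibniz r n d D) : D 1 = 0 := by
  have h := hL 0 1 1 (one_mem_homog r n d)
  simpa using h

lemma leibniz_tg {r n : ℕ} {d : Fin n → ℕ} {D : FGCA r n →ₗ[ℚ] FGCA r n}
    (hL : IsLeibniz r n d D) {i : Fin r} (h0 : D (tg r n i) = 0) (x : FGCA r n) :
    D (tg r n i * x) = tg r n i * D x := by
  rw [hL 2 _ x (tg_mem_homog r n d i), h0]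
  simp

lemma leibniz_vg {r n : ℕ} {d : Fin n → ℕ} {D : FGCA r n →ₗ[ℚ] FGCA r n}
    (hL : IsLeibniz r n d D) {j : Fin n} (hj : Odd (d j)) (x : FGCA r n) :
    D (vg r n j * x) = D (vg r n j) * x - vg r n j * D x := by
  rw [hL _ _ x (vg_mem_homog r n d j), hj.neg_one_pow, sub_eq_add_neg]
  exact congrArg _ (neg_one_smul ℚ (vg r n j * D x : FGCA r n))

/-- A derivation of degree `1` whose square vanishes on the generators is a differential. -/
lemma sq_eq_zero_of_generators {r n : ℕ} {d : Fin n → ℕ} {D : FGCA r n →ₗ[ℚ] FGCA r n}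
    (hL : IsLeibniz r n d D) (hdeg : RaisesDegByOne r n d D) (hd : ∀ j, Odd (d j))
    (ht : ∀ i, D (tg r n i) = 0) (hv : ∀ j, D (D (vg r n j)) = 0) : D ∘ₗ D = 0 := by
  rw [← LinearMap.ker_eq_top]
  refine eq_top_of_generators r n _ ?_ ?_ ?_
  · simp [leibniz_one hL]
  · intro i x hx
    rw [LinearMap.mem_ker, LinearMap.comp_apply] at hx ⊢
    rw [leibniz_tg hL (ht i), leibniz_tg hL (ht i), hx, mul_zero]
  · intro j x hx
    rw [LinearMap.mem_ker, LinearMap.comp_apply] at hx ⊢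
    rw [leibniz_vg hL (hd j), map_sub, leibniz_vg hL (hd j), hx,
      hL _ _ x (hdeg _ _ (vg_mem_homog r n d j)), hv j, (hd j).add_one.neg_one_pow]
    simp

/-- A `ℚ`-linear map commuting with multiplication by the `tᵢ`, as a map of modules over the polynomial ring. -/
def polyLinear {r n : ℕ} (D : FGCA r n →ₗ[ℚ] FGCA r n)
    (ht : ∀ i x, D (tg r n i * x) = tg r n i * D x) :
    FGCA r n →ₗ[MvPolynomial (Fin r) ℚ] FGCA r n where
  toFun := D
  map_add' := D.map_add
  map_smul' := by
    intro p
    induction p using MvPolynomial.induction_on with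
    | C a =>
      intro x
      have h : ∀ y : FGCA r n, (C a : MvPolynomial (Fin r) ℚ) • y = a • y :=
        fun y => algebraMap_smul _ a y
      simp only [h, map_smul, RingHom.id_apply]
    | add p q hp hq =>
      intro x
      rw [add_smul, map_add, hp, hq]
      exact (add_smul p q (D x)).symm
    | mul_X p i hp =>
      intro x
      rw [mul_smul, hp, ← tg_mul, ht, tg_mul, RingHom.id_apply, RingHom.id_apply, mul_smul]

/-! ### Finiteness over the polynomial ring -/

instance (n : ℕ) : Module.Finite ℚ (ExteriorAlgebra ℚ (Fin n → ℚ)) :=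
  Module.Finite.of_basis (Pi.basisFun ℚ (Fin n)).ExteriorAlgebra

lemma finite_quotient_pow (r N : ℕ) :
    Module.Finite ℚ (MvPolynomial (Fin r) ℚ ⧸
      Ideal.span (Set.range fun i : Fin r => (X i : MvPolynomial (Fin r) ℚ) ^ (N + 1))) := by
  set I := Ideal.span (Set.range fun i : Fin r => (X i : MvPolynomial (Fin r) ℚ) ^ (N + 1))
  have hint : Algebra.IsIntegral ℚ (MvPolynomial (Fin r) ℚ ⧸ I) := by
    constructor
    intro q
    obtain ⟨p, rfl⟩ := Ideal.Quotient.mk_surjective q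
    induction p using MvPolynomial.induction_on with
    | C a => exact isIntegral_algebraMap (R := ℚ) (x := a)
    | add p q hp hq => rw [map_add]; exact hp.add hq
    | mul_X p i hp =>
      rw [map_mul]
      refine hp.mul (IsIntegral.of_pow (Nat.succ_pos N) ?_)
      have : Ideal.Quotient.mk I (X i) ^ (N + 1) = 0 := by
        rw [← map_pow, Ideal.Quotient.eq_zero_iff_mem]
        exact Ideal.subset_span ⟨i, rfl⟩
      rw [this]
      exact isIntegral_zero
  exact Algebra.IsIntegral.finite

/-- A `ℚ`-linear image of a finite `ℚ[t₁, …, t_r]`-module in which all `tᵢ ^ (N + 1)`-multiples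
die is finite-dimensional. -/
lemma finite_of_pow_kill {r : ℕ} (N : ℕ) {M V : Type*} [AddCommGroup M] [Module ℚ M]
    [Module (MvPolynomial (Fin r) ℚ) M] [IsScalarTower ℚ (MvPolynomial (Fin r) ℚ) M]
    [Module.Finite (MvPolynomial (Fin r) ℚ) M] [AddCommGroup V] [Module ℚ V]
    (f : M →ₗ[ℚ] V) (hf : Function.Surjective f)
    (hk : ∀ (i : Fin r) (m : M), f ((X i : MvPolynomial (Fin r) ℚ) ^ (N + 1) • m) = 0) :
    Module.Finite ℚ V := by
  set I := Ideal.span (Set.range fun i : Fin r => (X i : MvPolynomial (Fin r) ℚ) ^ (N + 1))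
    with hI
  have := finite_quotient_pow r N
  rw [← hI] at this
  let J : Submodule (MvPolynomial (Fin r) ℚ) M := I • ⊤
  have hfin : Module.Finite ℚ (M ⧸ J) := by
    have h2 : Module.Finite (MvPolynomial (Fin r) ℚ ⧸ I) (M ⧸ J) := inferInstance
    have : IsScalarTower ℚ (MvPolynomial (Fin r) ℚ ⧸ I) (M ⧸ J) := by
      refine IsScalarTower.of_algebraMap_smul (R := ℚ)
        (A := MvPolynomial (Fin r) ℚ ⧸ I) (M := M ⧸ J) fun a x => ?_
      have h3 : algebraMap ℚ (MvPolynomial (Fin r) ℚ ⧸ I) a = Ideal.Quotient.mk I (C a) := rfl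
      obtain ⟨m, rfl⟩ := Submodule.Quotient.mk_surjective _ x
      rw [h3]
      have h4 : (C a : MvPolynomial (Fin r) ℚ) • m = a • m := algebraMap_smul _ a m
      exact congrArg (Submodule.Quotient.mk (p := J)) h4
    exact Module.Finite.trans (MvPolynomial (Fin r) ℚ ⧸ I) (M ⧸ J)
  have hJ : J.restrictScalars ℚ ≤ LinearMap.ker f := by
    intro x hx
    replace hx : x ∈ J := hx
    induction hx using Submodule.smul_induction_on' with
    | add x hx y hy h1 h2 => exact Submodule.add_mem _ h1 h2
    | smul p hp m hm =>
      clear hm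
      induction hp using Submodule.span_induction generalizing m with
      | zero => simp
      | add p q _ _ h1 h2 => rw [add_smul]; exact Submodule.add_mem _ (h1 m) (h2 m)
      | mem p hp =>
        obtain ⟨i, rfl⟩ := hp
        exact hk i m
      | smul a p _ h =>
        have : (a • p) • m = p • a • m := by rw [smul_eq_mul, mul_comm, mul_smul]
        rw [this]
        exact h _
  have hfin' : Module.Finite ℚ (M ⧸ J.restrictScalars ℚ) :=
    Module.Finite.equiv (Submodule.Quotient.restrictScalarsEquiv ℚ J).symm
  refine Module.Finite.of_surjective ((J.restrictScalars ℚ).liftQ f hJ) ?_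
  rw [← LinearMap.range_eq_top, Submodule.range_liftQ]
  exact LinearMap.range_eq_top.2 hf

/-- If `D` commutes with the `tᵢ` and a fixed power of each `tᵢ` sends cocycles to coboundaries,
then the cohomology is finite-dimensional. -/
lemma finite_cohomology {r n : ℕ} (N : ℕ) (D : FGCA r n →ₗ[ℚ] FGCA r n)
    (ht : ∀ i x, D (tg r n i * x) = tg r n i * D x)
    (hk : ∀ i x, D x = 0 → tg r n i ^ (N + 1) * x ∈ LinearMap.range D) :
    FiniteDimensional ℚ (Cohomology r n D) := by
  let K := LinearMap.ker (polyLinear D ht)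
  have hfinA : Module.Finite (MvPolynomial (Fin r) ℚ) (FGCA r n) := inferInstance
  have hK : Module.Finite (MvPolynomial (Fin r) ℚ) K := inferInstance
  let f : K →ₗ[ℚ] Cohomology r n D :=
    { toFun := fun z => ⟨(LinearMap.range D).mkQ z.1, Submodule.mem_map_of_mem z.2⟩
      map_add' := fun _ _ => rfl
      map_smul' := fun _ _ => rfl }
  refine finite_of_pow_kill (r := r) (M := K) (V := Cohomology r n D) N f ?_ ?_
  · rintro ⟨_, z, hz, rfl⟩
    exact ⟨⟨z, hz⟩, rfl⟩
  · intro i z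
    refine Subtype.ext ?_
    change (LinearMap.range D).mkQ ((X i : MvPolynomial (Fin r) ℚ) ^ (N + 1) • z.1) = 0
    have h : (X i : MvPolynomial (Fin r) ℚ) ^ (N + 1) • z.1 = tg r n i ^ (N + 1) * z.1 := by
      refine (Algebra.smul_def (A := FGCA r n) _ z.1).trans ?_
      rw [map_pow]
      rfl
    rw [h, Submodule.mkQ_apply, Submodule.Quotient.mk_eq_zero]
    exact hk i z.1 z.2

/-- `(abT)² = 0` for anticommuting `a`, `b` with `a² = 0` and central `T`, so `(abT + U⁴)(U⁴ - abT) = U⁸`. -/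
lemma conjugate_mul {R : Type*} [Ring R] (T U a b : R) (hT : ∀ x, x * T = T * x)
    (hU : ∀ x, x * U = U * x) (ha : a * a = 0) (hab : a * b = -(b * a)) :
    (a * b * T + U ^ 4) * (U ^ 4 - a * b * T) = U ^ 8 := by
  have h0 : a * b * (a * b) = 0 := by
    calc a * b * (a * b) = a * b * (-(b * a)) := by rw [← hab]
      _ = -(a * b * b * a) := by noncomm_ring
      _ = -(-(b * a) * b * a) := by rw [hab]
      _ = b * (a * b) * a := by noncomm_ring
      _ = b * (-(b * a)) * a := by rw [hab]
      _ = -(b * b * (a * a)) := by noncomm_ring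
      _ = 0 := by rw [ha, mul_zero, neg_zero]
  have hc : Commute (a * b * T) (U ^ 4) := Commute.pow_right (hU _) 4
  have h1 : a * b * T * (a * b * T) = 0 := by
    calc a * b * T * (a * b * T) = a * b * (T * (a * b)) * T := by simp only [mul_assoc]
      _ = a * b * (a * b) * T * T := by rw [← hT]; simp only [mul_assoc]
      _ = 0 := by rw [h0, zero_mul, zero_mul]
  rw [add_mul, mul_sub, mul_sub, h1, hc.eq, ← pow_add]
  abel

end Helpers

/-! ### The differential with `D v₄ = v₁v₂t₁ + t₁⁴` and `D v₅ = v₁v₃t₁ + t₂⁴` -/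

local notation "dv" => (![3, 3, 3, 7, 7] : Fin 5 → ℕ)
local notation "t₁" => tg 2 5 0
local notation "t₂" => tg 2 5 1
local notation "v₁" => vg 2 5 0
local notation "v₂" => vg 2 5 1
local notation "v₃" => vg 2 5 2
local notation "v₄" => vg 2 5 3
local notation "v₅" => vg 2 5 4

theorem stmt_6 (D : FGCA 2 5 →ₗ[ℚ] FGCA 2 5)
    (hLeib : IsLeibniz 2 5 dv D)
    (hdeg : RaisesDegByOne 2 5 dv D)
    (hD0 : D t₁ = (0 : FGCA 2 5))
    (hD1 : D t₂ = (0 : FGCA 2 5))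
    (hD2 : D v₁ = (0 : FGCA 2 5))
    (hD3 : D v₂ = (0 : FGCA 2 5))
    (hD4 : D v₃ = (0 : FGCA 2 5))
    (hD5 : D v₄ = v₁ * v₂ * t₁ + t₁ ^ 4)
    (hD6 : D v₅ = v₁ * v₃ * t₁ + t₂ ^ 4)
    : D ∘ₗ D = 0 ∧ FiniteDimensional ℚ (Cohomology 2 5 D) := by
  have ht : ∀ i, D (tg 2 5 i) = 0 := by
    intro i
    fin_cases i
    exacts [hD0, hD1]
  have hd : ∀ j : Fin 5, Odd ((![3, 3, 3, 7, 7] : Fin 5 → ℕ) j) := by decide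
  have hT : ∀ i x, D (tg 2 5 i * x) = tg 2 5 i * D x := fun i x => leibniz_tg hLeib (ht i) x
  have hTp : ∀ i (k : ℕ) x, D (tg 2 5 i ^ k * x) = tg 2 5 i ^ k * D x := by
    intro i k
    induction k with
    | zero => simp
    | succ k ih =>
      intro x
      rw [pow_succ, mul_assoc, ih, hT, ← mul_assoc]
  have hV : ∀ j x, D (vg 2 5 j * x) = D (vg 2 5 j) * x - vg 2 5 j * D x :=
    fun j x => leibniz_vg hLeib (hd j) x
  have hVV : ∀ i j k x, D (vg 2 5 i) = 0 → D (vg 2 5 j) = 0 →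
      D (vg 2 5 i * vg 2 5 j * tg 2 5 k * x) = vg 2 5 i * vg 2 5 j * tg 2 5 k * D x := by
    intro i j k x hi hj
    have h1 : D (vg 2 5 j * (tg 2 5 k * x)) = -(vg 2 5 j * (tg 2 5 k * D x)) := by
      rw [hV, hj, zero_mul, zero_sub, hT]
    rw [mul_assoc, mul_assoc, hV, h1, hi, zero_mul, zero_sub, mul_assoc, mul_assoc]
    exact (congrArg _ (mul_neg (vg 2 5 i) (vg 2 5 j * (tg 2 5 k * D x)))).trans
      (neg_neg (vg 2 5 i * (vg 2 5 j * (tg 2 5 k * D x))))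
  have hone : D 1 = 0 := leibniz_one hLeib
  have hsq : ∀ i j k l m, D (vg 2 5 i) = 0 → D (vg 2 5 j) = 0 →
      D (vg 2 5 i * vg 2 5 j * tg 2 5 k + tg 2 5 l ^ m) = 0 := by
    intro i j k l m hi hj
    have h1 := hVV i j k 1 hi hj
    have h2 := hTp l m 1
    simp only [hone, mul_one, mul_zero] at h1 h2
    rw [map_add, h1, h2, add_zero]
  have hv : ∀ j, D (D (vg 2 5 j)) = 0 := by
    intro j
    fin_cases j
    · exact (congrArg D hD2).trans (map_zero D)
    · exact (congrArg D hD3).trans (map_zero D)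
    · exact (congrArg D hD4).trans (map_zero D)
    · exact (congrArg D hD5).trans (hsq 0 1 0 0 4 hD2 hD3)
    · exact (congrArg D hD6).trans (hsq 0 2 0 1 4 hD2 hD4)
  refine ⟨sq_eq_zero_of_generators hLeib hdeg hd ht hv, finite_cohomology 7 D hT ?_⟩
  have key : ∀ (e j : Fin 5) (l : Fin 2), D (vg 2 5 j) = 0 →
      D (vg 2 5 e) = vg 2 5 0 * vg 2 5 j * tg 2 5 0 + tg 2 5 l ^ 4 →
      ∀ x, D x = 0 → tg 2 5 l ^ 8 * x ∈ LinearMap.range D := by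
    intro e j l hj he x hx
    -- The cochain `vₑ (t⁴ - v₁vⱼt₁)` has coboundary `t⁸`, and its second factor is a cocycle.
    refine ⟨vg 2 5 e * ((tg 2 5 l ^ 4 - vg 2 5 0 * vg 2 5 j * tg 2 5 0) * x), ?_⟩
    rw [hV, he, sub_mul, map_sub, hTp, hVV 0 j 0 x hD2 hj, hx, ← sub_mul, ← mul_assoc,
      conjugate_mul _ _ _ _ (tg_comm 2 5 0) (tg_comm 2 5 l) (vg_sq 2 5 0) (vg_anticomm 2 5 0 j)]
    simp
  intro i
  fin_cases i
  · exact key 3 1 0 hD3 hD5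
  · exact key 4 2 1 hD4 hD6

end
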